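/- arXiv:1108.1647 — 4 statements merged into one kernel-verified Lean document; each statement's English description precedes it below -/
import Mathlib

section
/- Let P be a real homogeneous polynomial of even degree 2k in n variables and let 0 < σ. Then for every x ∈ ℝⁿ, (2π)^{-n} ∫_{ℝⁿ} e^{-i tᵀx} e^{-σ²|t|²/2} P(t) dt = (-1)^k σ^{-(n+2k)} :P:(x₁/σ, ..., xₙ/σ) (2π)^{-n/2} e^{-|x|²/(2σ²)}. -/
open MeasureTheory Real ProbabilityTheory

noncomputable def hermiteR (m : ℕ) (x : ℝ) : ℝ :=
  Polynomial.aeval x (Polynomial.hermite m)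

noncomputable def renorm {n : ℕ} (P : MvPolynomial (Fin n) ℝ) (x : Fin n → ℝ) : ℝ :=
  ∑ m ∈ P.support, P.coeff m * ∏ i, hermiteR (m i) (x i)

noncomputable def Kconst (n k : ℕ) (σ : ℝ) (P : MvPolynomial (Fin n) ℝ) : ℝ :=
  ⨆ x : Fin n → ℝ, (σ ^ (n + 2*k))⁻¹ * |renorm P x| * Real.exp (-(1 - σ^2) * (∑ i, x i ^ 2) / 2)

noncomputable def fdens (n k : ℕ) (σ ε : ℝ) (P : MvPolynomial (Fin n) ℝ) (x : Fin n → ℝ) : ℝ :=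
  (2*π)^(-(n:ℝ)/2) * Real.exp (-(∑ i, x i ^ 2)/2) *
    (1 + (-1)^k * ε * (σ^(n+2*k))⁻¹ * renorm P (fun i => x i / σ) *
      Real.exp (-(1-σ^2) * (∑ i, x i ^ 2) / (2*σ^2)))

noncomputable def gdens (n k : ℕ) (σ ε : ℝ) (P : MvPolynomial (Fin n) ℝ) (a : Fin n → ℝ) (x : ℝ) : ℝ :=
  (2*π)^(-(1:ℝ)/2) * (Real.exp (-x^2/2) +
    (-1)^k * ε * MvPolynomial.eval a P * (σ^(2*k+1))⁻¹ * hermiteR (2*k) (x/σ) * Real.exp (-x^2/(2*σ^2)))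

noncomputable def J1 (σ : ℝ) (m : ℕ) (x : ℝ) (t : ℝ) : ℂ :=
  Complex.exp (-Complex.I * ((t * x : ℝ) : ℂ)) * ((t ^ m * Real.exp (-(σ^2/2) * t ^ 2) : ℝ) : ℂ)

lemma J1_cont (σ : ℝ) (m : ℕ) (x : ℝ) : Continuous (J1 σ m x) := by
  unfold J1; fun_prop

lemma J1_norm (σ : ℝ) (m : ℕ) (x t : ℝ) :
    ‖J1 σ m x t‖ = ‖t ^ m * Real.exp (-(σ^2/2) * t ^ 2)‖ := by
  unfold J1
  rw [norm_mul, Complex.norm_real, Complex.norm_exp]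
  simp

lemma base_int (σ : ℝ) (hσ : 0 < σ) (m : ℕ) :
    Integrable (fun t : ℝ => t ^ m * Real.exp (-(σ^2/2) * t ^ 2)) := by
  have := integrable_rpow_mul_exp_neg_mul_sq (b := σ^2/2) (by positivity) (s := m)
    (by have : (0:ℝ) ≤ m := by positivity
        linarith)
  simpa using this

lemma J1_int (σ : ℝ) (hσ : 0 < σ) (m : ℕ) (x : ℝ) : Integrable (J1 σ m x) :=
  (base_int σ hσ m).mono (J1_cont σ m x).aestronglyMeasurable
    (Filter.Eventually.of_forall fun t => (J1_norm σ m x t).le)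

lemma J1_deriv (σ : ℝ) (hσ : 0 < σ) (m : ℕ) (x : ℝ) :
    HasDerivAt (fun x => ∫ t, J1 σ m x t) (-Complex.I * ∫ t, J1 σ (m+1) x t) x := by
  have := (hasDerivAt_integral_of_dominated_loc_of_deriv_le (μ := volume) (x₀ := x)
    (s := Set.univ) (F := J1 σ m) (F' := fun x t => -Complex.I * J1 σ (m+1) x t)
    (bound := fun t => ‖t ^ (m+1) * Real.exp (-(σ^2/2) * t ^ 2)‖) Filter.univ_mem
    (Filter.Eventually.of_forall fun y => (J1_cont σ m y).aestronglyMeasurable)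
    (J1_int σ hσ m x) ((J1_cont σ (m+1) x).const_smul (-Complex.I)).aestronglyMeasurable
    (Filter.Eventually.of_forall fun t y _ => by
      rw [norm_mul, J1_norm]; simp) (base_int σ hσ (m+1)).norm
    (Filter.Eventually.of_forall fun t y _ => by
      unfold J1
      have h1 : HasDerivAt (fun y : ℝ => ((t * y : ℝ) : ℂ)) ((t:ℝ):ℂ) y := by
        have : HasDerivAt (fun y : ℝ => t * y) t y := by
          simpa using (hasDerivAt_id y).const_mul t
        exact this.ofReal_comp
      have h2 := ((h1.const_mul (-Complex.I)).cexp).mul_const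
        (((t ^ m * Real.exp (-(σ^2/2) * t ^ 2) : ℝ) : ℂ))
      refine h2.congr_deriv ?_
      simp only [pow_succ]
      push_cast
      ring)).2
  rwa [integral_const_mul] at this

lemma J1_zero (σ : ℝ) (hσ : 0 < σ) (x : ℝ) : ∫ t, J1 σ 0 x t =
    ((√(2*π) * σ⁻¹ * Real.exp (-x^2/(2*σ^2)) : ℝ) : ℂ) := by
  have h := fourierIntegral_gaussian (b := ((σ^2/2 : ℝ) : ℂ))
    (by rw [Complex.ofReal_re]; positivity) (-(x:ℂ))
  have e : ∀ t : ℝ, J1 σ 0 x t = Complex.exp (Complex.I * (-(x:ℂ)) * t) *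
      Complex.exp (-((σ^2/2 : ℝ) : ℂ) * t^2) := by
    intro t
    unfold J1
    push_cast
    congr 1
    · congr 1; ring
    · simp
  simp_rw [e]
  rw [h]
  rw [← Complex.ofReal_div]
  have : (1/2:ℂ) = ((1/2:ℝ):ℂ) := by norm_num
  rw [this, ← Complex.ofReal_cpow (by positivity), ← Real.sqrt_eq_rpow]
  have h3 : √(π / (σ^2/2)) = √(2*π) * σ⁻¹ := by
    rw [show π / (σ^2/2) = (2*π)/σ^2 by field_simp, Real.sqrt_div (by positivity),
      Real.sqrt_sq hσ.le, div_eq_mul_inv]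
  rw [h3]
  push_cast
  congr 2
  field_simp
  try ring

lemma hermite_deriv (σ : ℝ) (hσ : 0 < σ) (m : ℕ) (x : ℝ) :
    HasDerivAt (fun x => hermiteR m (x/σ) * Real.exp (-x^2/(2*σ^2)))
      (-σ⁻¹ * (hermiteR (m+1) (x/σ) * Real.exp (-x^2/(2*σ^2)))) x := by
  have h0 : HasDerivAt (fun x : ℝ => x / σ) (1/σ) x := (hasDerivAt_id x).div_const σ
  have h1 := ((Polynomial.hermite m).hasDerivAt_aeval (x/σ)).comp x h0
  have h2 : HasDerivAt (fun x : ℝ => -x^2/(2*σ^2)) (-(2*x)/(2*σ^2)) x := by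
    simpa using ((hasDerivAt_pow 2 x).neg).div_const (2*σ^2)
  have h3 := h1.mul h2.exp
  unfold hermiteR
  refine h3.congr_deriv ?_
  rw [Polynomial.hermite_succ]
  simp only [map_sub, map_mul, Polynomial.aeval_X, Function.comp]
  field_simp
  ring

lemma J1_val (σ : ℝ) (hσ : 0 < σ) (m : ℕ) (x : ℝ) : ∫ t, J1 σ m x t =
    (-Complex.I)^m * ((√(2*π) * (σ^(m+1))⁻¹ *
      (hermiteR m (x/σ) * Real.exp (-x^2/(2*σ^2))) : ℝ) : ℂ) := by
  induction m generalizing x with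
  | zero => rw [J1_zero σ hσ]; simp [hermiteR]
  | succ m ih =>
    have h1 := J1_deriv σ hσ m x
    have h2 := (((hermite_deriv σ hσ m x).const_mul
      (√(2*π) * (σ^(m+1))⁻¹)).ofReal_comp).const_mul ((-Complex.I)^m)
    rw [show (fun x => ∫ t, J1 σ m x t) = _ from funext ih] at h1
    have h3 := h1.unique h2
    have h4 : ∫ t, J1 σ (m+1) x t = Complex.I * (-Complex.I * ∫ t, J1 σ (m+1) x t) := by
      rw [← mul_assoc]; simp
    rw [h4, h3]
    push_cast
    rw [pow_succ (-Complex.I), pow_succ (σ:ℂ) (m+1), mul_inv]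
    ring

/-- For a real homogeneous polynomial P of even degree 2k and σ > 0,
(2π)^{-n} ∫ e^{-i tᵀx} e^{-σ²|t|²/2} P(t) dt
  = (-1)^k σ^{-(n+2k)} :P:(x/σ) (2π)^{-n/2} e^{-|x|²/(2σ²)}. -/
theorem stmt_1 (n k : ℕ) (P : MvPolynomial (Fin n) ℝ) (hP : P.IsHomogeneous (2 * k))
    (σ : ℝ) (hσ : 0 < σ) (x : Fin n → ℝ) :
    ((2*π)^(-(n:ℝ)) : ℝ) *
      ∫ t : Fin n → ℝ, Complex.exp (-Complex.I * ((∑ i, t i * x i : ℝ) : ℂ)) *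
        ((Real.exp (-σ^2 * (∑ i, t i ^ 2) / 2) * MvPolynomial.eval t P : ℝ) : ℂ)
    = (((-1)^k * (σ^(n+2*k))⁻¹ * renorm P (fun i => x i / σ) *
        (2*π)^(-(n:ℝ)/2) * Real.exp (-(∑ i, x i ^ 2) / (2*σ^2)) : ℝ) : ℂ) := by
  have e : ∀ t : Fin n → ℝ, Complex.exp (-Complex.I * ((∑ i, t i * x i : ℝ) : ℂ)) *
        ((Real.exp (-σ^2 * (∑ i, t i ^ 2) / 2) * MvPolynomial.eval t P : ℝ) : ℂ)
      = ∑ m ∈ P.support, ((P.coeff m : ℝ) : ℂ) * ∏ i, J1 σ (m i) (x i) (t i) := by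
    intro t
    have e1 : Complex.exp (-Complex.I * ((∑ i, t i * x i : ℝ) : ℂ)) =
        ∏ i, Complex.exp (-Complex.I * ((t i * x i : ℝ) : ℂ)) := by
      rw [← Complex.exp_sum, Complex.ofReal_sum, Finset.mul_sum]
    have e2 : Real.exp (-σ^2 * (∑ i, t i ^ 2) / 2) = ∏ i, Real.exp (-(σ^2/2) * t i ^ 2) := by
      rw [← Real.exp_sum, ← Finset.mul_sum]; congr 1; ring
    rw [e1, e2, MvPolynomial.eval_eq', Complex.ofReal_mul, Complex.ofReal_sum, Finset.mul_sum,
      Finset.mul_sum]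
    refine Finset.sum_congr rfl fun m _ => ?_
    simp only [J1, Finset.prod_mul_distrib, Complex.ofReal_mul, Complex.ofReal_prod]
    ring
  simp_rw [e]
  have hi : ∀ m : Fin n →₀ ℕ, Integrable (fun t : Fin n → ℝ => ∏ i, J1 σ (m i) (x i) (t i)) :=
    fun m => Integrable.fintype_prod (fun i => J1_int σ hσ (m i) (x i))
  rw [integral_finsetSum _ fun m _ => (hi m).const_mul _]
  simp_rw [integral_const_mul]
  unfold renorm
  have e3 : Real.exp (-(∑ i, x i ^ 2) / (2*σ^2)) = ∏ i, Real.exp (-x i ^ 2 / (2*σ^2)) := by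
    rw [← Real.exp_sum, ← Finset.sum_div, Finset.sum_neg_distrib]
  have e4 : (2*π)^(-(n:ℝ)) * √(2*π)^n = (2*π)^(-(n:ℝ)/2) := by
    rw [Real.sqrt_eq_rpow, ← Real.rpow_natCast, ← Real.rpow_mul (by positivity),
      ← Real.rpow_add (by positivity)]
    congr 1; ring
  rw [e3, ← e4]
  simp only [Finset.mul_sum, Finset.sum_mul, Complex.ofReal_sum]
  refine Finset.sum_congr rfl fun m hm => ?_
  have hd : ∑ i, m i = 2 * k := by
    have := hP (MvPolynomial.mem_support_iff.mp hm)
    rw [← this, Finsupp.weight_apply, Finsupp.sum_fintype _ _ (by simp)]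
    simp
  rw [integral_fintype_prod_volume_eq_prod (fun i => J1 σ (m i) (x i))]
  simp_rw [J1_val σ hσ]
  have e5 : ∏ i, (-Complex.I) ^ (m i) = (-1)^k := by
    rw [Finset.prod_pow_eq_pow_sum, hd, pow_mul]; simp
  have e6 : ∏ i, (σ ^ (m i + 1))⁻¹ = (σ^(n+2*k))⁻¹ := by
    rw [Finset.prod_inv_distrib, Finset.prod_pow_eq_pow_sum, Finset.sum_add_distrib, hd]
    simp [add_comm]
  rw [Finset.prod_mul_distrib, e5, ← Complex.ofReal_prod]
  simp only [Finset.prod_mul_distrib]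
  rw [e6]
  simp only [Finset.prod_const, Finset.card_univ, Fintype.card_fin]
  push_cast
  ring
end

section
/- Let 0 < σ < 1, let P be a real homogeneous polynomial of even degree 2k in n variables with P ≠ 0, let |ε| ≤ K(σ,P)⁻¹, and let μ be the probability measure on ℝⁿ with density f(·;ε,σ,P). Then for any unit vector a ∈ ℝⁿ, the pushforward of μ under the linear functional x ↦ aᵀx has characteristic function φ_a(t) = e^{-t²/2} + ε P(a) t^{2k} e^{-σ²t²/2} for t ∈ ℝ. -/
open MeasureTheory Real ProbabilityTheory

lemma aux_bound (p : Polynomial ℤ) (c : ℝ) (hc : 0 < c) :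
    ∃ C : ℝ, 0 ≤ C ∧ ∀ x : ℝ, |Polynomial.aeval x p| * Real.exp (-c * x ^ 2) ≤ C := by
  induction p using Polynomial.induction_on' with
  | add p q hp hq =>
    obtain ⟨C, hC0, hC⟩ := hp
    obtain ⟨D, hD0, hD⟩ := hq
    refine ⟨C + D, by positivity, fun x => ?_⟩
    rw [map_add]
    have h1 := abs_add_le (Polynomial.aeval x p) (Polynomial.aeval x q)
    have h2 := mul_le_mul_of_nonneg_right h1 (Real.exp_pos (-c * x ^ 2)).le
    linarith [hC x, hD x]
  | monomial j b =>
    refine ⟨|(b : ℝ)| * (1 + j.factorial / c ^ j), by positivity, fun x => ?_⟩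
    have h1 : |x| ^ j ≤ 1 + (x ^ 2) ^ j := by
      rcases le_total |x| 1 with h | h
      · have : |x| ^ j ≤ 1 := pow_le_one₀ (abs_nonneg x) h
        have : 0 ≤ (x ^ 2) ^ j := by positivity
        linarith
      · have : |x| ^ j ≤ (x ^ 2) ^ j := by
          apply pow_le_pow_left₀ (abs_nonneg x)
          rw [← sq_abs]; nlinarith
        linarith
    have h2 : (c * x ^ 2) ^ j / j.factorial ≤ Real.exp (c * x ^ 2) :=
      Real.pow_div_factorial_le_exp _ (by positivity) j
    have h3 : (x ^ 2) ^ j * Real.exp (-c * x ^ 2) ≤ j.factorial / c ^ j := by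
      rw [neg_mul, Real.exp_neg, ← div_eq_mul_inv, div_le_div_iff₀ (Real.exp_pos _) (by positivity)]
      rw [div_le_iff₀ (by positivity), mul_pow] at h2
      linarith
    have h4 : Real.exp (-c * x ^ 2) ≤ 1 := by
      rw [Real.exp_le_one_iff]; nlinarith [sq_nonneg x]
    rw [Polynomial.aeval_monomial, abs_mul, abs_pow, mul_assoc]
    have : |(algebraMap ℤ ℝ) b| = |(b : ℝ)| := by simp
    rw [this]
    apply mul_le_mul_of_nonneg_left _ (abs_nonneg _)
    have := mul_le_mul_of_nonneg_right h1 (Real.exp_pos (-c * x ^ 2)).le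
    linarith

/-- The one-dimensional building block. -/
noncomputable def gg (m : ℕ) (σ s x : ℝ) : ℂ :=
  ((hermiteR m (x / σ) * Real.exp (-(x / σ) ^ 2 / 2) : ℝ) : ℂ) * Complex.exp (Complex.I * s * x)

lemma hermiteR_cont (m : ℕ) : Continuous (hermiteR m) := by
  unfold hermiteR
  exact Polynomial.continuous_aeval _

lemma gg_cont (m : ℕ) (σ s : ℝ) : Continuous (gg m σ s) := by
  unfold gg
  have := hermiteR_cont m
  fun_prop

lemma gg_int1 (m : ℕ) (s : ℝ) : Integrable (gg m 1 s) := by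
  obtain ⟨C, hC0, hC⟩ := aux_bound (Polynomial.hermite m) (1/4) (by norm_num)
  have hg : Integrable (fun x : ℝ => C * Real.exp (-(1/4) * x ^ 2)) :=
    (integrable_exp_neg_mul_sq (by norm_num)).const_mul C
  refine hg.mono' (gg_cont m 1 s).aestronglyMeasurable (Filter.Eventually.of_forall fun x => ?_)
  have h1 : ‖Complex.exp (Complex.I * s * x)‖ = 1 := by
    have : Complex.I * s * x = ((s * x : ℝ) : ℂ) * Complex.I := by push_cast; ring
    rw [this, Complex.norm_exp_ofReal_mul_I]
  have h2 : Real.exp (-(x / 1) ^ 2 / 2) = Real.exp (-(1/4) * x ^ 2) * Real.exp (-(1/4) * x ^ 2) := by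
    rw [← Real.exp_add]; congr 1; ring
  rw [gg, norm_mul, h1, mul_one, Complex.norm_real, Real.norm_eq_abs, abs_mul, Real.abs_exp, h2,
    ← mul_assoc, div_one]
  exact mul_le_mul_of_nonneg_right (hC x) (Real.exp_pos _).le

lemma gg_scale (m : ℕ) (σ s x : ℝ) (hσ : 0 < σ) : gg m σ s x = gg m 1 (σ * s) (x / σ) := by
  unfold gg
  rw [div_one]
  congr 2
  have : (σ : ℂ) ≠ 0 := by exact_mod_cast hσ.ne'
  push_cast
  field_simp

lemma gg_int (m : ℕ) (σ s : ℝ) (hσ : 0 < σ) : Integrable (gg m σ s) := by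
  have : gg m σ s = fun x => gg m 1 (σ * s) (x / σ) := by
    ext x; exact gg_scale m σ s x hσ
  rw [this]
  exact (gg_int1 m (σ * s)).comp_div hσ.ne'

lemma gg_deriv (m : ℕ) (s x : ℝ) :
    HasDerivAt (gg m 1 s) (-gg (m + 1) 1 s x + Complex.I * s * gg m 1 s x) x := by
  have h1 : HasDerivAt (fun x : ℝ => hermiteR m x)
      (Polynomial.aeval x (Polynomial.derivative (Polynomial.hermite m))) x :=
    Polynomial.hasDerivAt_aeval _ x
  have h2 : HasDerivAt (fun x : ℝ => Real.exp (-x ^ 2 / 2)) (Real.exp (-x ^ 2 / 2) * (-x)) x := by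
    apply HasDerivAt.exp
    have := ((hasDerivAt_id x).pow 2).neg.div_const 2
    refine HasDerivAt.congr_deriv this ?_
    simp
    ring
  have h3 : HasDerivAt (fun x : ℝ => Complex.exp (Complex.I * s * x))
      (Complex.exp (Complex.I * s * x) * (Complex.I * s)) x := by
    have h := ((hasDerivAt_id (x : ℂ)).const_mul (Complex.I * s)).cexp.comp_ofReal
    simpa using h
  have h4 := (h1.mul h2).ofReal_comp.mul h3
  have e : gg m 1 s = (fun y : ℝ => (((fun x : ℝ => hermiteR m x) * (fun x : ℝ => Real.exp (-x ^ 2 / 2))) y : ℂ)) * fun x : ℝ => Complex.exp (Complex.I * s * x) := by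
    ext y; simp [gg]
  have hs : hermiteR (m + 1) x = x * hermiteR m x -
      Polynomial.aeval x (Polynomial.derivative (Polynomial.hermite m)) := by
    simp [hermiteR, Polynomial.hermite_succ]
  rw [e]
  refine HasDerivAt.congr_deriv h4 ?_
  simp only [gg, div_one, hs, Pi.mul_apply]
  push_cast
  ring

lemma gg_integral1 (m : ℕ) (s : ℝ) : ∫ x, gg m 1 s x =
    (Complex.I * s) ^ m * ((√(2 * π) * Real.exp (-s ^ 2 / 2) : ℝ) : ℂ) := by
  induction m with
  | zero =>
    have h := fourierIntegral_gaussian (b := (1/2 : ℂ)) (by norm_num) (s : ℂ)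
    have e : ∀ x, gg 0 1 s x =
        Complex.exp (Complex.I * s * x) * Complex.exp (-(1/2) * (x : ℂ) ^ 2) := by
      intro x
      simp only [gg, hermiteR, Polynomial.hermite_zero, div_one]
      rw [mul_comm]
      simp
      ring_nf
    refine (integral_congr_ae (Filter.Eventually.of_forall e)).trans ?_
    rw [h]
    have hp : (π / (1/2 : ℂ)) ^ (1 / 2 : ℂ) = ((√(2 * π) : ℝ) : ℂ) := by
      rw [Real.sqrt_eq_rpow, Complex.ofReal_cpow (by positivity)]
      push_cast
      congr 1
      ring
    rw [hp]
    push_cast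
    ring_nf
  | succ m ih =>
    have h := integral_eq_zero_of_hasDerivAt_of_integrable (gg_deriv m s)
      (((gg_int1 (m+1) s).neg).add ((gg_int1 m s).const_mul _)) (gg_int1 m s)
    rw [integral_add (f := fun x => -gg (m + 1) 1 s x) (gg_int1 (m+1) s).neg ((gg_int1 m s).const_mul _), integral_neg,
      integral_const_mul, ih] at h
    rw [pow_succ]
    linear_combination -h

lemma gg_integral (m : ℕ) (σ s : ℝ) (hσ : 0 < σ) : ∫ x, gg m σ s x =
    σ * ((Complex.I * (σ * s)) ^ m * ((√(2 * π) * Real.exp (-(σ * s) ^ 2 / 2) : ℝ) : ℂ)) := by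
  refine (integral_congr_ae (Filter.Eventually.of_forall fun x => gg_scale m σ s x hσ)).trans ?_
  rw [Measure.integral_comp_div (gg m 1 (σ * s)) σ, gg_integral1, abs_of_pos hσ]
  simp

lemma prod_integrable {n : ℕ} (m : Fin n → ℕ) (σ : ℝ) (hσ : 0 < σ) (s : Fin n → ℝ) :
    Integrable (fun x : Fin n → ℝ => ∏ i, gg (m i) σ (s i) (x i)) :=
  Integrable.fintype_prod (fun i => gg_int (m i) σ (s i) hσ)

lemma prod_integral {n : ℕ} (m : Fin n → ℕ) (σ : ℝ) (hσ : 0 < σ) (t : ℝ) (a : Fin n → ℝ)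
    (ha : ∑ i, a i ^ 2 = 1) :
    ∫ x : Fin n → ℝ, ∏ i, gg (m i) σ (t * a i) (x i) =
      (σ : ℂ) ^ n * (Complex.I * (σ * t)) ^ (∑ i, m i) * (∏ i, (a i : ℂ) ^ (m i)) *
        ((√(2 * π) ^ n * Real.exp (-σ ^ 2 * t ^ 2 / 2) : ℝ) : ℂ) := by
  rw [integral_fintype_prod_volume_eq_prod (fun i => gg (m i) σ (t * a i))]
  simp_rw [gg_integral _ _ _ hσ]
  have : Real.exp (-σ ^ 2 * t ^ 2 / 2) = ∏ i, Real.exp (-(σ * (t * a i)) ^ 2 / 2) := by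
    rw [← Real.exp_sum]
    congr 1
    have : ∀ i, -(σ * (t * a i)) ^ 2 / 2 = (-σ ^ 2 * t ^ 2 / 2) * a i ^ 2 := fun i => by ring
    simp_rw [this]
    rw [← Finset.mul_sum, ha, mul_one]
  rw [this]
  simp only [Finset.prod_mul_distrib, Finset.prod_const, Finset.card_univ, Fintype.card_fin,
    Complex.ofReal_mul, Complex.ofReal_prod, Complex.ofReal_pow, ← Finset.prod_pow_eq_pow_sum]
  have h2 : ∀ i, (Complex.I * (σ * ((t : ℂ) * a i))) ^ m i =
      (Complex.I * (σ * t)) ^ m i * (a i : ℂ) ^ m i := fun i => by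
    rw [← mul_pow]; ring
  simp only [h2, Finset.prod_mul_distrib]
  ring

lemma renorm_bound {n : ℕ} (P : MvPolynomial (Fin n) ℝ) (c : ℝ) (hc : 0 < c) :
    ∃ C : ℝ, ∀ x : Fin n → ℝ, |renorm P x| * Real.exp (-c * ∑ i, x i ^ 2) ≤ C := by
  choose C hC0 hC using fun m => aux_bound (Polynomial.hermite m) c hc
  refine ⟨∑ m ∈ P.support, |P.coeff m| * ∏ i, C (m i), fun x => ?_⟩
  unfold renorm
  refine (mul_le_mul_of_nonneg_right (Finset.abs_sum_le_sum_abs _ _) (Real.exp_pos _).le).trans ?_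
  rw [Finset.sum_mul]
  refine Finset.sum_le_sum fun m _ => ?_
  rw [abs_mul, mul_assoc, Finset.mul_sum, Real.exp_sum, Finset.abs_prod, ← Finset.prod_mul_distrib]
  refine mul_le_mul_of_nonneg_left ?_ (abs_nonneg _)
  exact Finset.prod_le_prod (fun i _ => by positivity) (fun i _ => hC (m i) (x i))

lemma fdens_nonneg (n k : ℕ) (σ : ℝ) (hσ0 : 0 < σ) (hσ1 : σ < 1)
    (P : MvPolynomial (Fin n) ℝ) (ε : ℝ) (hε : |ε| ≤ (Kconst n k σ P)⁻¹) (x : Fin n → ℝ) :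
    0 ≤ fdens n k σ ε P x := by
  have hbdd : BddAbove (Set.range fun x : Fin n → ℝ =>
      (σ ^ (n + 2*k))⁻¹ * |renorm P x| * Real.exp (-(1 - σ^2) * (∑ i, x i ^ 2) / 2)) := by
    obtain ⟨C, hC⟩ := renorm_bound P ((1 - σ^2)/2) (by nlinarith)
    refine ⟨(σ ^ (n + 2*k))⁻¹ * C, ?_⟩
    rintro _ ⟨y, rfl⟩
    simp only
    rw [mul_assoc]
    refine mul_le_mul_of_nonneg_left ?_ (by positivity)
    have := hC y
    rwa [show -((1 - σ^2)/2) * ∑ i, y i ^ 2 = -(1 - σ^2) * (∑ i, y i ^ 2) / 2 by ring] at this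
  have hK := le_ciSup hbdd (fun i => x i / σ)
  change _ ≤ Kconst n k σ P at hK
  simp only at hK
  have he : -(1 - σ^2) * (∑ i, (x i / σ) ^ 2) / 2 = -(1-σ^2) * (∑ i, x i ^ 2) / (2*σ^2) := by
    simp_rw [div_pow]
    rw [← Finset.sum_div]
    field_simp
  rw [he] at hK
  have hK0 : 0 ≤ Kconst n k σ P := le_trans (by positivity) hK
  unfold fdens
  refine mul_nonneg (by positivity) ?_
  have h1 : |(-1)^k * ε * (σ^(n+2*k))⁻¹ * renorm P (fun i => x i / σ) *
      Real.exp (-(1-σ^2) * (∑ i, x i ^ 2) / (2*σ^2))| ≤ 1 := by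
    rw [abs_mul, abs_mul, abs_mul, abs_mul, Real.abs_exp, abs_pow, abs_neg, abs_one, one_pow,
      one_mul, abs_of_pos (show 0 < (σ^(n+2*k))⁻¹ by positivity), mul_assoc, mul_assoc, ← mul_assoc _ |renorm P _|]
    calc _ ≤ (Kconst n k σ P)⁻¹ * Kconst n k σ P :=
          mul_le_mul hε hK (by positivity) (by positivity)
      _ ≤ 1 := inv_mul_le_one
  linarith [(abs_le.mp h1).1]

lemma renorm_cont {n : ℕ} (P : MvPolynomial (Fin n) ℝ) : Continuous (renorm P) := by
  unfold renorm
  have := hermiteR_cont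
  fun_prop

lemma fdens_cont (n k : ℕ) (σ ε : ℝ) (P : MvPolynomial (Fin n) ℝ) :
    Continuous (fdens n k σ ε P) := by
  unfold fdens
  have := (renorm_cont P)
  fun_prop

lemma gg_prod {n : ℕ} (m : Fin n → ℕ) (σ : ℝ) (t : ℝ) (a x : Fin n → ℝ) :
    ∏ i, gg (m i) σ (t * a i) (x i) =
      ((∏ i, hermiteR (m i) (x i / σ) : ℝ) : ℂ) * ((Real.exp (-(∑ i, x i ^ 2) / (2 * σ ^ 2)) : ℝ) : ℂ) *
        Complex.exp (Complex.I * t * ((∑ i, a i * x i : ℝ) : ℂ)) := by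
  unfold gg
  have h1 : Real.exp (-(∑ i, x i ^ 2) / (2 * σ ^ 2)) = ∏ i, Real.exp (-(x i / σ) ^ 2 / 2) := by
    rw [← Real.exp_sum, ← Finset.sum_neg_distrib, Finset.sum_div]
    congr 1
    refine Finset.sum_congr rfl fun i _ => ?_
    rw [div_pow, ← neg_div, div_div, mul_comm]
  have h2 : Complex.exp (Complex.I * t * ((∑ i, a i * x i : ℝ) : ℂ)) =
      ∏ i, Complex.exp (Complex.I * ((t * a i : ℝ) : ℂ) * x i) := by
    rw [← Complex.exp_sum]
    congr 1
    push_cast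
    rw [Finset.mul_sum]
    refine Finset.sum_congr rfl fun i _ => ?_
    ring
  rw [h1, h2]
  simp only [Finset.prod_mul_distrib, Complex.ofReal_mul, Complex.ofReal_prod]

lemma fdens_expand (n k : ℕ) (σ ε : ℝ) (hσ : 0 < σ) (P : MvPolynomial (Fin n) ℝ) (t : ℝ)
    (a x : Fin n → ℝ) :
    (fdens n k σ ε P x : ℂ) * Complex.exp (Complex.I * t * ((∑ i, a i * x i : ℝ) : ℂ)) =
      (((2*π)^(-(n:ℝ)/2) : ℝ) : ℂ) * ((∏ i : Fin n, gg 0 1 (t * a i) (x i)) +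
        (((-1)^k * ε * (σ^(n+2*k))⁻¹ : ℝ) : ℂ) *
          ∑ m ∈ P.support, ((P.coeff m : ℝ) : ℂ) * ∏ i, gg (m i) σ (t * a i) (x i)) := by
  have h0 := gg_prod (fun _ : Fin n => 0) 1 t a x
  simp_rw [h0, gg_prod]
  have h1 : Real.exp (-(∑ i, x i ^ 2) / (2 * σ ^ 2)) =
      Real.exp (-(∑ i, x i ^ 2)/2) * Real.exp (-(1-σ^2) * (∑ i, x i ^ 2) / (2*σ^2)) := by
    rw [← Real.exp_add]
    congr 1
    field_simp
    ring
  have h2 : ∏ i : Fin n, hermiteR 0 (x i / 1) = 1 := by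
    simp [hermiteR]
  rw [h1, h2]
  simp_rw [← mul_assoc]
  rw [← Finset.sum_mul, ← Finset.sum_mul]
  unfold fdens renorm
  push_cast
  rw [one_pow, mul_one]
  ring

/-- Under the probability measure μ with density f(·;ε,σ,P), for any unit vector a,
the pushforward of μ under x ↦ aᵀx has characteristic function
φ_a(t) = e^{-t²/2} + ε P(a) t^{2k} e^{-σ²t²/2}. -/
theorem stmt_4 (n k : ℕ) (σ : ℝ) (hσ0 : 0 < σ) (hσ1 : σ < 1)
    (P : MvPolynomial (Fin n) ℝ) (hP : P.IsHomogeneous (2 * k)) (hP0 : P ≠ 0)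
    (ε : ℝ) (hε : |ε| ≤ (Kconst n k σ P)⁻¹)
    (μ : Measure (Fin n → ℝ))
    (hμ : μ = volume.withDensity (fun x => ENNReal.ofReal (fdens n k σ ε P x)))
    (a : Fin n → ℝ) (ha : ∑ i, a i ^ 2 = 1) :
    ∀ t : ℝ,
      (∫ y : ℝ, Complex.exp (Complex.I * (t : ℂ) * (y : ℂ))
          ∂(Measure.map (fun x => ∑ i, a i * x i) μ))
        = ((Real.exp (-t^2 / 2) +
            ε * MvPolynomial.eval a P * t^(2*k) * Real.exp (-σ^2 * t^2 / 2) : ℝ) : ℂ) := by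
  intro t
  have hmeas : Measurable (fun x : Fin n → ℝ => ∑ i, a i * x i) := by fun_prop
  rw [integral_map hmeas.aemeasurable (by fun_prop), hμ,
    integral_withDensity_eq_integral_toReal_smul
      ((fdens_cont n k σ ε P).measurable.ennreal_ofReal)
      (Filter.Eventually.of_forall fun x => ENNReal.ofReal_lt_top)]
  simp_rw [ENNReal.toReal_ofReal (fdens_nonneg n k σ hσ0 hσ1 P ε hε _), Complex.real_smul,
    fdens_expand n k σ ε hσ0 P t a]
  rw [integral_const_mul, integral_add (prod_integrable (fun _ => 0) 1 one_pos _)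
    ((integrable_finsetSum _ fun m _ => (prod_integrable (fun i => m i) σ hσ0 _).const_mul _).const_mul _),
    integral_const_mul, integral_finsetSum _
      (fun m _ => (prod_integrable (fun i => m i) σ hσ0 _).const_mul _)]
  simp_rw [integral_const_mul]
  rw [prod_integral (fun _ => 0) 1 one_pos t a ha]
  have hdeg : ∀ m ∈ P.support, ∑ i, m i = 2 * k := by
    intro m hm
    have := hP (MvPolynomial.mem_support_iff.mp hm)
    rw [← this, Finsupp.weight_apply, Finsupp.sum_fintype _ _ (by simp)]
    simp
  have hsum : ∑ m ∈ P.support, ((P.coeff m : ℝ) : ℂ) * ∫ x : Fin n → ℝ, ∏ i, gg (m i) σ (t * a i) (x i) =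
      (σ : ℂ) ^ n * (Complex.I * (σ * t)) ^ (2 * k) *
        ((√(2 * π) ^ n * Real.exp (-σ ^ 2 * t ^ 2 / 2) : ℝ) : ℂ) * ((MvPolynomial.eval a P : ℝ) : ℂ) := by
    rw [MvPolynomial.eval_eq', Complex.ofReal_sum, Finset.mul_sum]
    refine Finset.sum_congr rfl fun m hm => ?_
    rw [prod_integral (fun i => m i) σ hσ0 t a ha, hdeg m hm]
    push_cast
    ring
  rw [hsum]
  have hpi : (2*π)^(-(n:ℝ)/2) * √(2 * π) ^ n = 1 := by
    have hp : 0 < 2 * π := by positivity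
    rw [Real.sqrt_eq_rpow, ← Real.rpow_natCast, ← Real.rpow_mul hp.le, ← Real.rpow_add hp]
    rw [show -(n:ℝ)/2 + 1/2 * n = 0 by ring, Real.rpow_zero]
  have hI : (Complex.I * (σ * t)) ^ (2 * k) = (-1 : ℂ) ^ k * (σ : ℂ) ^ (2 * k) * (t : ℂ) ^ (2 * k) := by
    rw [mul_pow, mul_pow, pow_mul Complex.I, Complex.I_sq]
    ring
  have hpiC : (((2*π)^(-(n:ℝ)/2) : ℝ) : ℂ) * (√(2 * π) : ℂ) ^ n = 1 := by exact_mod_cast hpi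
  have hσC : ((σ : ℂ) ^ (n + 2 * k))⁻¹ * ((σ : ℂ) ^ n * (σ : ℂ) ^ (2 * k)) = 1 := by
    rw [← pow_add]
    exact inv_mul_cancel₀ (pow_ne_zero _ (by exact_mod_cast hσ0.ne'))
  have hk : (-1 : ℂ) ^ k * (-1 : ℂ) ^ k = 1 := by rw [← mul_pow]; norm_num
  rw [hI]
  set c : ℂ := (((2*π)^(-(n:ℝ)/2) : ℝ) : ℂ) with hc
  have e1 : Real.exp (-1 ^ 2 * t ^ 2 / 2) = Real.exp (-t ^ 2 / 2) := by congr 1; ring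
  rw [e1]
  simp only [Complex.ofReal_mul, Complex.ofReal_add, Complex.ofReal_pow, Complex.ofReal_inv,
    Complex.ofReal_neg, Complex.ofReal_one, one_pow, Finset.sum_const_zero, pow_zero,
    Finset.prod_const_one, one_mul, mul_one]
  set E1 : ℂ := ((Real.exp (-t ^ 2 / 2) : ℝ) : ℂ)
  set E2 : ℂ := ((Real.exp (-σ ^ 2 * t ^ 2 / 2) : ℝ) : ℂ)
  set ev : ℂ := ((MvPolynomial.eval a P : ℝ) : ℂ)
  set S : ℂ := ((σ : ℂ) ^ (n + 2 * k))⁻¹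
  set q : ℂ := (√(2 * π) : ℂ) ^ n
  set u : ℂ := (-1 : ℂ) ^ k
  calc _ = (c * q) * E1 + (c * q) * (S * ((σ : ℂ) ^ n * (σ : ℂ) ^ (2 * k))) * (u * u) *
        (ε * ev * (t : ℂ) ^ (2 * k) * E2) := by ring
    _ = _ := by rw [hpiC, hσC, hk]; ring
end

section
/- Let n ≥ 2 and let S₁, ..., S_N be a finite collection of (n−1)-dimensional linear subspaces of ℝⁿ. Then there exists a probability measure μ on ℝⁿ that is not Gaussian but such that for every nonzero vector a ∈ S₁ ∪ S₂ ∪ ... ∪ S_N, the pushforward of μ under x ↦ aᵀx is the Gaussian distribution on ℝ with mean 0 and variance |a|²; in particular, the orthogonal projection of μ onto each subspace S_j is the standard Gaussian distribution on S_j. -/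
open MeasureTheory Real ProbabilityTheory

/-- The standard Gaussian measure on `ℝⁿ`. -/
noncomputable def stdG (n : ℕ) : Measure (Fin n → ℝ) := Measure.pi (fun _ => gaussianReal 0 1)

instance stdG_prob (n : ℕ) : IsProbabilityMeasure (stdG n) := by
  unfold stdG; infer_instance

lemma stdG_char (n : ℕ) (t : Fin n → ℝ) :
    ∫ x, Complex.exp (Complex.I * ((t ⬝ᵥ x : ℝ) : ℂ)) ∂(stdG n)
      = ((Real.exp (-(t ⬝ᵥ t) / 2) : ℝ) : ℂ) := by
  have h : ∀ x : Fin n → ℝ, Complex.exp (Complex.I * ((t ⬝ᵥ x : ℝ) : ℂ))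
      = ∏ i, Complex.exp ((t i : ℂ) * (x i : ℂ) * Complex.I) := by
    intro x
    rw [← Complex.exp_sum]
    congr 1
    simp only [dotProduct]
    push_cast
    rw [Finset.mul_sum]
    exact Finset.sum_congr rfl fun i _ => by ring
  simp_rw [h]
  unfold stdG
  rw [integral_fintype_prod_eq_prod (f := fun i (y : ℝ) =>
    Complex.exp ((t i : ℂ) * (y : ℂ) * Complex.I))]
  simp_rw [← charFun_apply_real, charFun_gaussianReal]
  rw [← Complex.exp_sum]
  push_cast
  congr 1
  simp only [dotProduct]
  push_cast
  rw [neg_div, Finset.sum_div, ← Finset.sum_neg_distrib]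
  exact Finset.sum_congr rfl fun i _ => by simp; ring

/-- `F` times the Gaussian characteristic function is the transform of a bounded density. -/
def Good {n : ℕ} (F : (Fin n → ℝ) → ℝ) : Prop :=
  ∃ g : (Fin n → ℝ) → ℝ, ∃ K : ℝ, Continuous g ∧ (∀ x, |g x| ≤ K) ∧
    ∀ t, ∫ x, (g x : ℂ) * Complex.exp (Complex.I * ((t ⬝ᵥ x : ℝ) : ℂ)) ∂(stdG n)
      = ((Real.exp (-(t ⬝ᵥ t) / 2) * F t : ℝ) : ℂ)

lemma cont_exp {n : ℕ} (t : Fin n → ℝ) :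
    Continuous fun x : Fin n → ℝ => Complex.exp (Complex.I * ((t ⬝ᵥ x : ℝ) : ℂ)) := by
  unfold dotProduct; fun_prop

lemma norm_exp_le {n : ℕ} (t x : Fin n → ℝ) :
    ‖Complex.exp (Complex.I * ((t ⬝ᵥ x : ℝ) : ℂ))‖ = 1 := by
  rw [mul_comm]; exact Complex.norm_exp_ofReal_mul_I _

lemma integrable_aux {n : ℕ} {g : (Fin n → ℝ) → ℝ} {K : ℝ} (hg : Continuous g)
    (hK : ∀ x, |g x| ≤ K) (t : Fin n → ℝ) :
    Integrable (fun x => (g x : ℂ) * Complex.exp (Complex.I * ((t ⬝ᵥ x : ℝ) : ℂ))) (stdG n) := by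
  refine Integrable.of_bound (C := K) ?_ (Filter.Eventually.of_forall fun x => ?_)
  · exact ((Complex.continuous_ofReal.comp hg).mul (cont_exp t)).aestronglyMeasurable
  · rw [norm_mul, norm_exp_le, mul_one]; simpa using hK x

lemma Good.add {n : ℕ} {F G : (Fin n → ℝ) → ℝ} (hF : Good F) (hG : Good G) :
    Good (fun t => F t + G t) := by
  obtain ⟨g, K, hg, hK, hI⟩ := hF
  obtain ⟨g', K', hg', hK', hI'⟩ := hG
  refine ⟨fun x => g x + g' x, K + K', hg.add hg',
    fun x => (abs_add_le _ _).trans (add_le_add (hK x) (hK' x)), fun t => ?_⟩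
  have := integral_add (integrable_aux hg hK t) (integrable_aux hg' hK' t)
  rw [hI, hI'] at this
  push_cast at this ⊢
  simp_rw [add_mul]
  rw [this]; ring

lemma Good.smul {n : ℕ} {F : (Fin n → ℝ) → ℝ} (c : ℝ) (hF : Good F) :
    Good (fun t => c * F t) := by
  obtain ⟨g, K, hg, hK, hI⟩ := hF
  refine ⟨fun x => c * g x, |c| * K, continuous_const.mul hg,
    fun x => by rw [abs_mul]; exact mul_le_mul_of_nonneg_left (hK x) (abs_nonneg c), fun t => ?_⟩
  push_cast
  simp_rw [mul_assoc]
  rw [integral_const_mul, hI]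
  push_cast; ring

lemma good_cosh {n : ℕ} (c : Fin n → ℝ) : Good (fun t => Real.cosh (c ⬝ᵥ t)) := by
  refine ⟨fun x => Real.exp (c ⬝ᵥ c / 2) * Real.cos (c ⬝ᵥ x), Real.exp (c ⬝ᵥ c / 2), ?_, ?_, ?_⟩
  · unfold dotProduct; fun_prop
  · intro x
    rw [abs_mul, abs_of_pos (Real.exp_pos _)]
    exact mul_le_of_le_one_right (Real.exp_pos _).le (Real.abs_cos_le_one _)
  · intro t
    have hint : ∀ u : Fin n → ℝ, Integrable
        (fun x => Complex.exp (Complex.I * ((u ⬝ᵥ x : ℝ) : ℂ))) (stdG n) := fun u => by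
      simpa using integrable_aux (g := fun _ => 1) (K := 1) continuous_const (by simp) u
    have h : ∀ x : Fin n → ℝ, ((Real.exp (c ⬝ᵥ c / 2) * Real.cos (c ⬝ᵥ x) : ℝ) : ℂ)
          * Complex.exp (Complex.I * ((t ⬝ᵥ x : ℝ) : ℂ))
        = ((Real.exp (c ⬝ᵥ c / 2) / 2 : ℝ) : ℂ) *
          (Complex.exp (Complex.I * (((t + c) ⬝ᵥ x : ℝ) : ℂ))
            + Complex.exp (Complex.I * (((t - c) ⬝ᵥ x : ℝ) : ℂ))) := by
      intro x
      rw [add_dotProduct, sub_dotProduct]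
      push_cast
      rw [Complex.cos, mul_add Complex.I, mul_sub Complex.I, Complex.exp_add, Complex.exp_sub]
      have e1 : Complex.exp (((c ⬝ᵥ x : ℝ) : ℂ) * Complex.I)
        = Complex.exp (Complex.I * ((c ⬝ᵥ x : ℝ) : ℂ)) := by rw [mul_comm]
      have e2 : Complex.exp (-((c ⬝ᵥ x : ℝ) : ℂ) * Complex.I)
        = (Complex.exp (Complex.I * ((c ⬝ᵥ x : ℝ) : ℂ)))⁻¹ := by
        rw [← Complex.exp_neg]; congr 1; ring
      rw [e1, e2]; ring
    simp_rw [h]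
    rw [integral_const_mul, integral_add (hint _) (hint _), stdG_char, stdG_char]
    norm_cast
    rw [Real.cosh_eq]
    have a1 : -((t + c) ⬝ᵥ (t + c)) / 2 = -(t ⬝ᵥ t) / 2 - c ⬝ᵥ c / 2 - c ⬝ᵥ t := by
      simp only [add_dotProduct, dotProduct_add, dotProduct_comm t c]; ring
    have a2 : -((t - c) ⬝ᵥ (t - c)) / 2 = -(t ⬝ᵥ t) / 2 - c ⬝ᵥ c / 2 + c ⬝ᵥ t := by
      simp only [sub_dotProduct, dotProduct_sub, dotProduct_comm t c]; ring
    rw [a1, a2, Real.exp_add, Real.exp_sub, Real.exp_sub, Real.exp_neg]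
    field_simp
    ring

lemma good_prod {n : ℕ} {ι : Type*} (s : Finset ι) (b : ι → Fin n → ℝ) :
    ∀ c : Fin n → ℝ, Good (fun t =>
      (∏ j ∈ s, (2 * Real.cosh (b j ⬝ᵥ t) - 2)) * Real.cosh (c ⬝ᵥ t)) := by
  classical
  induction s using Finset.induction_on with
  | empty => intro c; simpa using good_cosh c
  | insert j s hj ih =>
    intro c
    have := ((ih (c + b j)).add (ih (c - b j))).add ((ih c).smul (-2))
    convert this using 2 with t
    rw [Finset.prod_insert hj, add_dotProduct, sub_dotProduct, Real.cosh_add, Real.cosh_sub]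
    ring

lemma growth_contra {ι : Type*} (s : Finset ι) (y : ι → ℝ)
    (hy : ∀ j ∈ s, y j ≠ 0) (ε κ : ℝ) (hε : 0 < ε)
    (h : ∀ r : ℝ, 1 + ε * ∏ j ∈ s, (2 * Real.cosh (r * y j) - 2) = Real.exp (κ * r ^ 2)) :
    False := by
  have hκ : 0 < κ := by
    have h1 := h 1
    have : 0 < ∏ j ∈ s, (2 * Real.cosh (1 * y j) - 2) := by
      refine Finset.prod_pos fun j hj => ?_
      have := Real.one_lt_cosh.2 (hy j hj)
      rw [one_mul]; linarith
    have h2 : 1 < Real.exp (κ * 1 ^ 2) := by rw [← h1]; nlinarith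
    simpa using Real.one_lt_exp_iff.1 h2
  set B := ∑ j ∈ s, |y j| with hB
  have hB0 : 0 ≤ B := Finset.sum_nonneg fun _ _ => abs_nonneg _
  set C := 1 + ε * 2 ^ s.card with hC
  have hC0 : 1 ≤ C := by rw [hC]; have : 0 < ε * 2 ^ s.card := by positivity
                         linarith
  have key : ∀ r : ℝ, 0 ≤ r → κ * r ^ 2 ≤ C + B * r := by
    intro r hr
    have hb : ∏ j ∈ s, (2 * Real.cosh (r * y j) - 2) ≤ 2 ^ s.card * Real.exp (B * r) := by
      calc _ ≤ ∏ j ∈ s, (2 * Real.exp (|y j| * r)) := by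
            refine Finset.prod_le_prod (fun j _ => ?_) (fun j _ => ?_)
            · have := Real.one_le_cosh (r * y j); linarith
            · have h1 : Real.cosh (r * y j) ≤ Real.exp (|y j| * r) := by
                rw [← Real.cosh_abs, abs_mul, abs_of_nonneg hr, mul_comm, Real.cosh_eq]
                have : Real.exp (-(|y j| * r)) ≤ Real.exp (|y j| * r) :=
                  Real.exp_le_exp.2 (by have := mul_nonneg (abs_nonneg (y j)) hr; linarith)
                linarith
              linarith
        _ = _ := by
            rw [Finset.prod_mul_distrib, Finset.prod_const, ← Real.exp_sum, hB, Finset.sum_mul]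
    have h1 : Real.exp (κ * r ^ 2) ≤ Real.exp (C + B * r) := by
      rw [← h r, Real.exp_add]
      have e1 : 1 ≤ Real.exp (B * r) := Real.one_le_exp (mul_nonneg hB0 hr)
      have e2 : C ≤ Real.exp C := by have := Real.add_one_le_exp C; linarith
      calc _ ≤ Real.exp (B * r) + ε * (2 ^ s.card * Real.exp (B * r)) := by gcongr
        _ = C * Real.exp (B * r) := by rw [hC]; ring
        _ ≤ _ := by gcongr
    exact Real.exp_le_exp.1 h1
  have hr0 : 0 ≤ (C + B) / κ := by positivity
  have := key ((C + B) / κ + 1) (by linarith)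
  set r := (C + B) / κ + 1 with hr
  have hkr : κ * r = C + B + κ := by rw [hr]; field_simp
  have hr1 : 1 ≤ r := by linarith
  nlinarith

/-- Given finitely many (n−1)-dimensional subspaces of ℝⁿ, there is a non-Gaussian
probability measure μ on ℝⁿ such that for every nonzero a in the union of the subspaces,
the pushforward of μ under x ↦ aᵀx is Gaussian with mean 0 and variance |a|². -/
theorem stmt_8 (n : ℕ) (hn : 2 ≤ n) (N : ℕ) (S : Fin N → Submodule ℝ (Fin n → ℝ))
    (hS : ∀ j, Module.finrank ℝ (S j) = n - 1) :
    ∃ μ : Measure (Fin n → ℝ), IsProbabilityMeasure μ ∧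
      (¬ ∃ (m : Fin n → ℝ) (Sig : Matrix (Fin n) (Fin n) ℝ), Sig.PosSemidef ∧
        ∀ t : Fin n → ℝ,
          (∫ x, Complex.exp (Complex.I * ((∑ i, t i * x i : ℝ) : ℂ)) ∂μ)
            = Complex.exp (Complex.I * ((∑ i, m i * t i : ℝ) : ℂ)
                - ((∑ i, ∑ j, t i * Sig i j * t j : ℝ) : ℂ) / 2)) ∧
      ∀ a : Fin n → ℝ, a ≠ 0 → (∃ j, a ∈ S j) →
        Measure.map (fun x => ∑ i, a i * x i) μ
          = gaussianReal 0 (Real.toNNReal (∑ i, a i ^ 2)) := by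
  classical
  -- normal functionals
  have hf : ∀ j, ∃ f : Module.Dual ℝ (Fin n → ℝ), f ≠ 0 ∧ S j ≤ LinearMap.ker f := by
    intro j
    refine Submodule.exists_le_ker_of_lt_top _ (lt_top_iff_ne_top.2 fun h => ?_)
    have := hS j
    rw [h, finrank_top, Module.finrank_fin_fun] at this
    omega
  choose f hf0 hfS using hf
  let b : Option (Fin N) → Fin n → ℝ := fun o =>
    o.elim (fun _ => 1) (fun j i => f j (fun k => if i = k then 1 else 0))
  have hbf : ∀ j t, b (some j) ⬝ᵥ t = f j t := by
    intro j t
    rw [LinearMap.pi_apply_eq_sum_univ (f j) t]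
    simp only [dotProduct, b, Option.elim, smul_eq_mul]
    exact Finset.sum_congr rfl fun i _ => mul_comm _ _
  obtain ⟨v, hv⟩ : ∃ v, ∀ o, b o ⬝ᵥ v ≠ 0 := by
    have := Module.Dual.exists_forall_ne_zero_of_forall_exists
      (fun o => (dotProductBilin ℝ ℝ (b o) : Module.Dual ℝ (Fin n → ℝ))) ?_
    · simpa using this
    · rintro (_ | j)
      · refine ⟨fun _ => 1, ?_⟩
        simp [b, dotProduct]; omega
      · by_contra! hcon
        apply hf0 j
        ext1 x
        have := hcon (Pi.single x 1)
        ext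
        simpa [hbf] using this
  set F : (Fin n → ℝ) → ℝ := fun t => ∏ o, (2 * Real.cosh (b o ⬝ᵥ t) - 2) with hF
  have hgood : Good F := by
    have := good_prod Finset.univ b 0
    simp only [zero_dotProduct, Real.cosh_zero, mul_one] at this
    exact this
  obtain ⟨g, K, hg, hK, hI⟩ := hgood
  have hK0 : 0 ≤ K := (abs_nonneg _).trans (hK 0)
  set ε := 1 / (K + 1) with hε
  have hε0 : 0 < ε := by positivity
  set d : (Fin n → ℝ) → ℝ := fun x => 1 + ε * g x with hd
  have hdc : Continuous d := by fun_prop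
  have hd0 : ∀ x, 0 ≤ d x := by
    intro x
    have h1 := (abs_le.1 (hK x)).1
    have h2 : ε * (K + 1) = 1 := by rw [hε]; field_simp
    have h3 : 0 ≤ ε * (g x + K) := mul_nonneg hε0.le (by linarith)
    simp only [hd]
    nlinarith
  have hdint : ∀ t, ∫ x, (d x : ℂ) * Complex.exp (Complex.I * ((t ⬝ᵥ x : ℝ) : ℂ)) ∂(stdG n)
      = ((Real.exp (-(t ⬝ᵥ t) / 2) * (1 + ε * F t) : ℝ) : ℂ) := by
    intro t
    have i1 : Integrable (fun x => Complex.exp (Complex.I * ((t ⬝ᵥ x : ℝ) : ℂ))) (stdG n) := by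
      simpa using integrable_aux (g := fun _ => 1) (K := 1) continuous_const (by simp) t
    have i2 := (integrable_aux hg hK t).const_mul (ε : ℂ)
    have h := integral_add i1 i2
    rw [integral_const_mul, hI, stdG_char] at h
    simp only [hd]
    push_cast at h ⊢
    simp_rw [add_mul, one_mul, mul_assoc]
    rw [h]; ring
  have hF0 : F 0 = 0 := by simp [hF]
  set μ := (stdG n).withDensity (fun x => ENNReal.ofReal (d x)) with hμ
  have hdK : ∀ x, |d x| ≤ 1 + ε * K := fun x => by
    have := hK x
    simp only [hd]
    refine (abs_add_le _ _).trans ?_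
    rw [abs_one, abs_mul, abs_of_pos hε0]
    gcongr
  have hdi : Integrable d (stdG n) :=
    Integrable.of_bound (C := 1 + ε * K) hdc.aestronglyMeasurable
      (Filter.Eventually.of_forall hdK)
  have hprob : IsProbabilityMeasure μ := by
    constructor
    rw [hμ, withDensity_apply _ MeasurableSet.univ, Measure.restrict_univ,
      ← ofReal_integral_eq_lintegral_ofReal hdi (Filter.Eventually.of_forall hd0)]
    have h := hdint 0
    simp only [zero_dotProduct, hF0] at h
    simp only [Complex.ofReal_zero, mul_zero, Complex.exp_zero, mul_one, neg_zero, zero_div,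
      Real.exp_zero, add_zero] at h
    rw [integral_complex_ofReal] at h
    rw [Complex.ofReal_inj.1 h, ENNReal.ofReal_one]
  have hchar : ∀ t, ∫ x, Complex.exp (Complex.I * ((t ⬝ᵥ x : ℝ) : ℂ)) ∂μ
      = ((Real.exp (-(t ⬝ᵥ t) / 2) * (1 + ε * F t) : ℝ) : ℂ) := by
    intro t
    rw [hμ, integral_withDensity_eq_integral_toReal_smul (by fun_prop) (by simp), ← hdint]
    refine integral_congr_ae (Filter.Eventually.of_forall fun x => ?_)
    simp [ENNReal.toReal_ofReal (hd0 x)]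
  refine ⟨μ, hprob, ?_, ?_⟩
  · rintro ⟨m, Sig, -, h⟩
    have hFpos : ∀ t, 0 ≤ F t := fun t => Finset.prod_nonneg fun o _ => by
      have := Real.one_le_cosh (b o ⬝ᵥ t); linarith
    set q := ∑ i, ∑ j, v i * Sig i j * v j with hq
    refine growth_contra (Finset.univ : Finset (Option (Fin N))) 
      (fun o => b o ⬝ᵥ v) (fun o _ => hv o) ε ((v ⬝ᵥ v - q) / 2) hε0 fun r => ?_
    have h1 := (hchar (r • v)).symm.trans (h (r • v))
    have h2 := congrArg norm h1
    rw [Complex.norm_real, Complex.norm_exp, Real.norm_of_nonneg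
      (mul_nonneg (Real.exp_pos _).le (by have := mul_nonneg hε0.le (hFpos (r • v)); linarith))] at h2
    have h3 : ∑ i, ∑ j, (r • v) i * Sig i j * (r • v) j = r ^ 2 * q := by
      rw [hq, Finset.mul_sum]
      refine Finset.sum_congr rfl fun i _ => ?_
      rw [Finset.mul_sum]
      refine Finset.sum_congr rfl fun j _ => ?_
      simp; ring
    rw [h3] at h2
    have h4 : (Complex.I * ((∑ i, m i * (r • v) i : ℝ) : ℂ) - ((r ^ 2 * q : ℝ) : ℂ) / 2).re
        = - (r ^ 2 * q) / 2 := by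
      rw [Complex.sub_re, Complex.re_mul_ofReal]
      have : (((r ^ 2 * q : ℝ) : ℂ) / 2) = ((r ^ 2 * q / 2 : ℝ) : ℂ) := by push_cast; ring
      rw [this, Complex.ofReal_re, Complex.I_re]; ring
    rw [h4] at h2
    have h5 : (v ⬝ᵥ v - q) / 2 * r ^ 2
        = - (r ^ 2 * q) / 2 - (-((r • v) ⬝ᵥ (r • v)) / 2) := by
      simp only [smul_dotProduct, dotProduct_smul, smul_eq_mul]; ring
    rw [h5, Real.exp_sub, ← h2, mul_div_cancel_left₀ _ (Real.exp_pos _).ne']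
    simp only [hF, dotProduct_smul, smul_eq_mul]
  · rintro a - ⟨j, haj⟩
    have hmeas : Measurable (fun x : Fin n → ℝ => ∑ i, a i * x i) := by fun_prop
    have : IsProbabilityMeasure (Measure.map (fun x => ∑ i, a i * x i) μ) :=
      Measure.isProbabilityMeasure_map hmeas.aemeasurable
    refine Measure.ext_of_charFun (funext fun s => ?_)
    rw [charFun_gaussianReal, charFun_apply_real,
      integral_map hmeas.aemeasurable (by fun_prop)]
    have h := hchar (s • a)
    have hFa : F (s • a) = 0 := by
      refine Finset.prod_eq_zero (Finset.mem_univ (some j)) ?_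
      have : f j a = 0 := hfS j haj
      rw [hbf, map_smul, this]; simp
    rw [hFa] at h
    have e : ∀ x : Fin n → ℝ, Complex.exp ((s : ℂ) * ((∑ i, a i * x i : ℝ) : ℂ) * Complex.I)
        = Complex.exp (Complex.I * (((s • a) ⬝ᵥ x : ℝ) : ℂ)) := by
      intro x
      rw [smul_dotProduct]
      simp only [dotProduct, smul_eq_mul]
      congr 1
      push_cast; ring
    simp_rw [e]
    rw [h, Real.coe_toNNReal _ (Finset.sum_nonneg fun i _ => sq_nonneg _)]
    have h6 : (s • a) ⬝ᵥ (s • a) = s ^ 2 * ∑ i, a i ^ 2 := by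
      rw [smul_dotProduct, dotProduct_smul]
      simp only [smul_eq_mul, dotProduct, pow_two]; ring
    rw [h6]
    push_cast
    simp only [mul_zero, add_zero, mul_one, zero_mul, zero_sub]
    congr 1
    ring
end

section
/- Let n be even and let P(t₁,...,tₙ) = t₁t₂···tₙ ∏_{i>j} (t_i² − t_j²), a homogeneous polynomial of degree n². Then its renormalized version is given by the Hermite determinant :P:(x₁,...,xₙ) = det[ H_{2i−1}(x_j) ]_{i,j=1,...,n}. In particular, :P: is antisymmetric in the variables x₁, ..., xₙ: interchanging any two variables changes its sign. -/
open MeasureTheory Real ProbabilityTheory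

/-- The polynomial P(t) = t₁⋯tₙ ∏_{i>j}(t_i² − t_j²). -/
noncomputable def Pex (n : ℕ) : MvPolynomial (Fin n) ℝ :=
  (∏ i, MvPolynomial.X i) *
    ∏ p ∈ Finset.univ.filter (fun p : Fin n × Fin n => p.2 < p.1),
      (MvPolynomial.X p.1 ^ 2 - MvPolynomial.X p.2 ^ 2)

theorem renorm_eq_constr {n : ℕ} (P : MvPolynomial (Fin n) ℝ) (x : Fin n → ℝ) :
    renorm P x = (MvPolynomial.basisMonomials (Fin n) ℝ).constr ℝ
      (fun m : Fin n →₀ ℕ => ∏ i, hermiteR (m i) (x i)) P := by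
  rw [Module.Basis.constr_apply]
  rfl

/-- The exponent vector attached to a permutation. -/
noncomputable def expVec {n : ℕ} (s : Equiv.Perm (Fin n)) : Fin n →₀ ℕ :=
  Finsupp.equivFunOnFinite.symm (fun i => 2 * (s i : ℕ) + 1)

theorem prod_X_eq {n : ℕ} (s : Equiv.Perm (Fin n)) :
    ∏ i, (MvPolynomial.X i : MvPolynomial (Fin n) ℝ) ^ (2 * (s i : ℕ) + 1)
      = MvPolynomial.monomial (expVec s) 1 := by
  rw [MvPolynomial.monomial_eq, Finsupp.prod_fintype _ _ (by simp)]
  simp [expVec]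

theorem Pex_eq_sum (n : ℕ) :
    Pex n = ∑ s : Equiv.Perm (Fin n),
      ((Equiv.Perm.sign s : ℤ) : ℝ) • MvPolynomial.monomial (expVec s) (1 : ℝ) := by
  have h1 : Pex n = Matrix.det (Matrix.of fun i j : Fin n =>
      (MvPolynomial.X j : MvPolynomial (Fin n) ℝ) ^ (2 * (i : ℕ) + 1)) := by
    have h2 := Matrix.det_mul_row (fun j : Fin n => (MvPolynomial.X j : MvPolynomial (Fin n) ℝ))
      (Matrix.vandermonde
        (fun j : Fin n => (MvPolynomial.X j : MvPolynomial (Fin n) ℝ) ^ 2)).transpose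
    rw [Matrix.det_transpose, Matrix.det_vandermonde] at h2
    have h3 : (Matrix.of fun i j : Fin n =>
        (MvPolynomial.X j : MvPolynomial (Fin n) ℝ) ^ (2 * (i : ℕ) + 1)) =
        Matrix.of fun i j : Fin n => (MvPolynomial.X j : MvPolynomial (Fin n) ℝ) *
          (Matrix.vandermonde
            (fun j : Fin n => (MvPolynomial.X j : MvPolynomial (Fin n) ℝ) ^ 2)).transpose i j := by
      ext1 i j
      simp only [Matrix.of_apply, Matrix.transpose_apply, Matrix.vandermonde_apply]
      rw [← pow_mul, pow_succ, mul_comm]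
    rw [h3, h2, Pex]
    congr 1
    rw [Finset.prod_sigma']
    refine Finset.prod_bij' (fun p _ => ⟨p.2, p.1⟩) (fun p _ => (p.2, p.1)) ?_ ?_ ?_ ?_ ?_ <;>
      simp
  rw [h1, Matrix.det_apply]
  refine Finset.sum_congr rfl fun s _ => ?_
  simp only [Matrix.of_apply]
  rw [prod_X_eq, Units.smul_def, Int.cast_smul_eq_zsmul]

theorem renorm_Pex (n : ℕ) (x : Fin n → ℝ) :
    renorm (Pex n) x
      = Matrix.det (Matrix.of fun i j : Fin n => hermiteR (2*(i:ℕ)+1) (x j)) := by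
  rw [renorm_eq_constr, Pex_eq_sum, map_sum, Matrix.det_apply]
  refine Finset.sum_congr rfl fun s _ => ?_
  rw [map_smul, Units.smul_def, ← Int.cast_smul_eq_zsmul ℝ]
  congr 1
  have h := (MvPolynomial.basisMonomials (Fin n) ℝ).constr_basis ℝ
      (fun m : Fin n →₀ ℕ => ∏ i, hermiteR (m i) (x i)) (expVec s)
  rw [MvPolynomial.coe_basisMonomials] at h
  rw [h]
  simp [expVec]

theorem Pex_homog (n : ℕ) : (Pex n).IsHomogeneous (n^2) := by
  rw [Pex_eq_sum]
  refine MvPolynomial.IsHomogeneous.sum _ _ _ fun s hs => ?_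
  rw [MvPolynomial.smul_monomial]
  refine MvPolynomial.isHomogeneous_monomial _ ?_
  rw [Finsupp.degree_eq_sum]
  simp only [expVec, Finsupp.equivFunOnFinite_symm_apply_apply]
  rw [Equiv.sum_comp s (fun i : Fin n => 2 * (i : ℕ) + 1),
    Fin.sum_univ_eq_sum_range (fun i => 2 * i + 1) n]
  clear hs s
  induction n with
  | zero => simp
  | succ k ih => rw [Finset.sum_range_succ, ih]; ring

/-- For n even, P(t) = t₁⋯tₙ ∏_{i>j}(t_i² − t_j²) is homogeneous of degree n², its
renormalized version is the Hermite determinant det[H_{2i−1}(x_j)], and the latter is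
antisymmetric: interchanging any two variables changes its sign. -/
theorem stmt_10 (n : ℕ) (hn : Even n) :
    (Pex n).IsHomogeneous (n^2) ∧
    (∀ x : Fin n → ℝ,
      renorm (Pex n) x = Matrix.det (Matrix.of fun i j : Fin n => hermiteR (2*(i:ℕ)+1) (x j))) ∧
    (∀ (x : Fin n → ℝ) (i j : Fin n), i ≠ j →
      renorm (Pex n) (x ∘ Equiv.swap i j) = - renorm (Pex n) x) := by
  refine ⟨Pex_homog n, renorm_Pex n, fun x i j hij => ?_⟩
  rw [renorm_Pex, renorm_Pex]
  have h := Matrix.det_permute' (Equiv.swap i j)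
    (Matrix.of fun i j : Fin n => hermiteR (2*(i:ℕ)+1) (x j))
  rw [Equiv.Perm.sign_swap hij] at h
  simp only [Units.val_neg, Units.val_one, Int.cast_neg, Int.cast_one, neg_mul, one_mul] at h
  rw [← h]
  rfl
end
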